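/- arXiv:2111.11792 — 4 statements merged into one kernel-verified Lean document; each statement's English description precedes it below -/
import Mathlib

section
/- Let d and ζ be real numbers with 0 < ζ < 1 and max(2ζ−2, −2ζ) < d < 0. Then the function u ↦ u^{d/2−1}·(u^{ζ} + u^{−ζ})·((1−u)^{−d−1}(1+u) − 1) is Lebesgue integrable on (0,1), and −(1/2)·(1/(d/2 + ζ) + 1/(d/2 − ζ)) − (1/2)·∫₀¹ u^{d/2−1}(u^{ζ} + u^{−ζ})((1−u)^{−d−1}(1+u) − 1) du = −ζ·(sin(πζ)/sin(πd/2))·Γ(d/2 − ζ)·Γ(d/2 + ζ)/Γ(1 + d). -/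
open Real MeasureTheory

/-!
Splitting `u ^ ζ + u ^ (-ζ)` reduces the integral to the two exponents `q = d / 2 ± ζ`, one of
which may be negative, so the Beta integral does not apply directly. With `b = -d`, the identity
`(1 - u) ^ (b - 1) * (1 + u) - 1 = ((1 - u) ^ b - 1) + 2 * u * (1 - u) ^ (b - 1)` isolates the
regularized Beta integrand `u ^ (q - 1) * ((1 - u) ^ b - 1)`, whose integral is
`Γ(q) Γ(b + 1) / Γ(q + b + 1) - 1 / q` for `-1 < q` by integration by parts. The terms `1 / q`
cancel, and the reflection formula rewrites the remaining Gamma quotients over `Γ(1 + d)`.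
-/

open Filter Set Topology

section BetaIntegral

variable {a b : ℝ}

lemma betaIntegrand_eq_ofReal {u : ℝ} (hu : u ∈ Icc 0 1) (a b : ℝ) :
    (u : ℂ) ^ ((a : ℂ) - 1) * (1 - (u : ℂ)) ^ ((b : ℂ) - 1) =
      ((u ^ (a - 1) * (1 - u) ^ (b - 1) : ℝ) : ℂ) := by
  rw [Complex.ofReal_mul, Complex.ofReal_cpow hu.1, Complex.ofReal_cpow (sub_nonneg.2 hu.2)]
  push_cast
  rfl

lemma intervalIntegrable_rpow_mul_one_sub_rpow (ha : 0 < a) (hb : 0 < b) :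
    IntervalIntegrable (fun u : ℝ => u ^ (a - 1) * (1 - u) ^ (b - 1)) volume 0 1 := by
  have hC : IntervalIntegrable (fun u : ℝ => ((u ^ (a - 1) * (1 - u) ^ (b - 1) : ℝ) : ℂ))
      volume 0 1 :=
    (Complex.betaIntegral_convergent (by simpa) (by simpa)).congr_uIoo fun u hu =>
      betaIntegrand_eq_ofReal (Ioo_subset_Icc_self (uIoo_of_le zero_le_one (α := ℝ) ▸ hu)) a b
  rw [intervalIntegrable_iff] at hC ⊢
  exact hC.re

lemma integral_rpow_mul_one_sub_rpow (ha : 0 < a) (hb : 0 < b) :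
    ∫ u in (0 : ℝ)..1, u ^ (a - 1) * (1 - u) ^ (b - 1) =
      Gamma a * Gamma b / Gamma (a + b) := by
  have hC : Complex.betaIntegral a b =
      ((∫ u in (0 : ℝ)..1, u ^ (a - 1) * (1 - u) ^ (b - 1) : ℝ) : ℂ) := by
    rw [← intervalIntegral.integral_ofReal]
    exact intervalIntegral.integral_congr_Ioo_of_le zero_le_one fun u hu =>
      betaIntegrand_eq_ofReal (Ioo_subset_Icc_self hu) a b
  have hre := ProbabilityTheory.beta_eq_betaIntegralReal a b ha hb
  rw [hC, Complex.ofReal_re] at hre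
  exact hre.symm

end BetaIntegral

section RegularizedBetaIntegral

variable {q b u : ℝ}

lemma abs_one_sub_rpow_sub_one_le (hb : 0 ≤ b) (hu : u ∈ Icc 0 1) :
    |(1 - u) ^ b - 1| ≤ (b + 1) * u := by
  obtain ⟨hu0, hu1⟩ := hu
  have hle : (1 - u) ^ b ≤ 1 := rpow_le_one (by linarith) (by linarith) hb
  rw [abs_of_nonpos (by linarith)]
  have hbu : 0 ≤ b * u := mul_nonneg hb hu0
  rcases le_total 1 b with h1b | hb1
  · have bernoulli : 1 + b * -u ≤ (1 + -u) ^ b :=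
      one_add_mul_self_le_rpow_one_add (by linarith) h1b
    rw [← sub_eq_add_neg] at bernoulli
    linarith
  · have : 1 - u ≤ (1 - u) ^ b := self_le_rpow_of_le_one (by linarith) (by linarith) hb1
    linarith

lemma abs_rpow_mul_one_sub_rpow_sub_one_le (q : ℝ) (hb : 0 ≤ b) (hu : u ∈ Ioo 0 1) :
    |u ^ q * ((1 - u) ^ b - 1)| ≤ (b + 1) * u ^ (q + 1) := by
  have hq : 0 ≤ u ^ q := rpow_nonneg hu.1.le q
  calc |u ^ q * ((1 - u) ^ b - 1)|
      = u ^ q * |(1 - u) ^ b - 1| := by rw [abs_mul, abs_of_nonneg hq]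
    _ ≤ u ^ q * ((b + 1) * u) := by
        gcongr
        exact abs_one_sub_rpow_sub_one_le hb (Ioo_subset_Icc_self hu)
    _ = (b + 1) * u ^ (q + 1) := by rw [rpow_add_one hu.1.ne']; ring

lemma intervalIntegrable_rpow_mul_one_sub_rpow_sub_one (hq : -1 < q) (hb : 0 ≤ b) :
    IntervalIntegrable (fun u : ℝ => u ^ (q - 1) * ((1 - u) ^ b - 1)) volume 0 1 := by
  have hdom : IntervalIntegrable (fun u : ℝ => (b + 1) * u ^ q) volume 0 1 :=
    (intervalIntegral.intervalIntegrable_rpow' hq).const_mul _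
  rw [intervalIntegrable_iff_integrableOn_Ioo_of_le zero_le_one] at hdom ⊢
  refine Integrable.mono' hdom (by fun_prop)
    ((ae_restrict_iff' measurableSet_Ioo).2 (Eventually.of_forall fun u hu => ?_))
  simpa only [sub_add_cancel, norm_eq_abs] using abs_rpow_mul_one_sub_rpow_sub_one_le (q - 1) hb hu

lemma tendsto_rpow_mul_one_sub_rpow_sub_one_zero (hq : -1 < q) (hb : 0 ≤ b) :
    Tendsto (fun u : ℝ => u ^ q * ((1 - u) ^ b - 1)) (𝓝[>] 0) (𝓝 0) := by
  have hmajorant : Tendsto (fun u : ℝ => (b + 1) * u ^ (q + 1)) (𝓝[>] 0) (𝓝 0) := by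
    have hcont : ContinuousAt (fun u : ℝ => (b + 1) * u ^ (q + 1)) 0 :=
      continuousAt_const.mul (continuousAt_rpow_const _ _ (Or.inr (by linarith)))
    simpa only [zero_rpow (by linarith : q + 1 ≠ 0), mul_zero] using
      hcont.tendsto.mono_left nhdsWithin_le_nhds
  refine squeeze_zero_norm' ?_ hmajorant
  filter_upwards [Ioo_mem_nhdsGT zero_lt_one] with u hu
  exact abs_rpow_mul_one_sub_rpow_sub_one_le q hb hu

lemma tendsto_rpow_mul_one_sub_rpow_sub_one_one (q : ℝ) (hb : 0 < b) :
    Tendsto (fun u : ℝ => u ^ q * ((1 - u) ^ b - 1)) (𝓝[<] 1) (𝓝 (-1)) := by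
  have hcont : ContinuousAt (fun u : ℝ => u ^ q * ((1 - u) ^ b - 1)) 1 :=
    (continuousAt_rpow_const _ _ (Or.inl one_ne_zero)).mul
      ((ContinuousAt.rpow_const (by fun_prop) (Or.inr hb.le)).sub continuousAt_const)
  simpa only [one_rpow, sub_self, zero_rpow hb.ne', zero_sub, one_mul] using
    hcont.tendsto.mono_left nhdsWithin_le_nhds

lemma hasDerivAt_rpow_mul_one_sub_rpow_sub_one (q b : ℝ) (hu : u ∈ Ioo 0 1) :
    HasDerivAt (fun u : ℝ => u ^ q * ((1 - u) ^ b - 1))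
      (q * (u ^ (q - 1) * ((1 - u) ^ b - 1)) - b * (u ^ q * (1 - u) ^ (b - 1))) u := by
  have hpow : HasDerivAt (fun u : ℝ => u ^ q) (q * u ^ (q - 1)) u :=
    hasDerivAt_rpow_const (Or.inl hu.1.ne')
  have hsub : HasDerivAt (fun u : ℝ => 1 - u) (-1) u := (hasDerivAt_id u).const_sub 1
  have hsubpow := (hsub.rpow_const (p := b) (Or.inl (sub_pos.2 hu.2).ne')).sub_const 1
  exact (hpow.mul hsubpow).congr_deriv (by ring)

lemma integral_rpow_mul_one_sub_rpow_sub_one (hq : -1 < q) (hq0 : q ≠ 0) (hb : 0 < b) :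
    ∫ u in (0 : ℝ)..1, u ^ (q - 1) * ((1 - u) ^ b - 1) =
      Gamma q * Gamma (b + 1) / Gamma (q + b + 1) - 1 / q := by
  have hq1 : 0 < q + 1 := by linarith
  have hreg := (intervalIntegrable_rpow_mul_one_sub_rpow_sub_one hq hb.le).const_mul q
  have hbeta := (intervalIntegrable_rpow_mul_one_sub_rpow hq1 hb).const_mul b
  have hbeta_val := integral_rpow_mul_one_sub_rpow hq1 hb
  simp only [add_sub_cancel_right] at hbeta hbeta_val
  have parts := intervalIntegral.integral_eq_sub_of_hasDerivAt_of_tendsto zero_lt_one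
    (fun u hu => hasDerivAt_rpow_mul_one_sub_rpow_sub_one q b hu) (hreg.sub hbeta)
    (tendsto_rpow_mul_one_sub_rpow_sub_one_zero hq hb.le)
    (tendsto_rpow_mul_one_sub_rpow_sub_one_one q hb)
  rw [intervalIntegral.integral_sub hreg hbeta, intervalIntegral.integral_const_mul,
    intervalIntegral.integral_const_mul, hbeta_val, Gamma_add_one hq0, add_right_comm] at parts
  rw [Gamma_add_one hb.ne']
  refine mul_left_cancel₀ hq0 ?_
  rw [mul_sub, mul_one_div_cancel hq0]
  linear_combination parts

lemma rpow_mul_one_sub_rpow_mul_one_add_sub_one (q b : ℝ) (hu : u ∈ Ioo 0 1) :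
    u ^ (q - 1) * ((1 - u) ^ (b - 1) * (1 + u) - 1) =
      u ^ (q - 1) * ((1 - u) ^ b - 1) + 2 * (u ^ (q + 1 - 1) * (1 - u) ^ (b - 1)) := by
  have hpow : u ^ (q + 1 - 1) = u ^ (q - 1) * u := by
    rw [← rpow_add_one hu.1.ne', add_sub_right_comm]
  have hsubpow : (1 - u) ^ b = (1 - u) ^ (b - 1) * (1 - u) := by
    rw [← rpow_add_one (sub_pos.2 hu.2).ne', sub_add_cancel]
  rw [hpow, hsubpow]
  ring

lemma intervalIntegrable_rpow_mul_one_sub_rpow_mul_one_add_sub_one (hq : -1 < q) (hb : 0 < b) :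
    IntervalIntegrable (fun u : ℝ => u ^ (q - 1) * ((1 - u) ^ (b - 1) * (1 + u) - 1))
      volume 0 1 := by
  refine ((intervalIntegrable_rpow_mul_one_sub_rpow_sub_one hq hb.le).add
    ((intervalIntegrable_rpow_mul_one_sub_rpow (by linarith : 0 < q + 1) hb).const_mul
      2)).congr_uIoo fun u hu => ?_
  rw [uIoo_of_le zero_le_one] at hu
  exact (rpow_mul_one_sub_rpow_mul_one_add_sub_one q b hu).symm

lemma integral_rpow_mul_one_sub_rpow_mul_one_add_sub_one (hq : -1 < q) (hq0 : q ≠ 0)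
    (hb : 0 < b) :
    ∫ u in (0 : ℝ)..1, u ^ (q - 1) * ((1 - u) ^ (b - 1) * (1 + u) - 1) =
      (2 * q + b) * (Gamma q * Gamma b / Gamma (q + b + 1)) - 1 / q := by
  have hq1 : 0 < q + 1 := by linarith
  rw [intervalIntegral.integral_congr_Ioo_of_le zero_le_one fun u hu =>
      rpow_mul_one_sub_rpow_mul_one_add_sub_one q b hu,
    intervalIntegral.integral_add (intervalIntegrable_rpow_mul_one_sub_rpow_sub_one hq hb.le)
      ((intervalIntegrable_rpow_mul_one_sub_rpow hq1 hb).const_mul 2),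
    intervalIntegral.integral_const_mul, integral_rpow_mul_one_sub_rpow_sub_one hq hq0 hb,
    integral_rpow_mul_one_sub_rpow hq1 hb, Gamma_add_one hq0, Gamma_add_one hb.ne',
    add_right_comm q 1 b]
  ring

end RegularizedBetaIntegral

section Reflection

variable {x y : ℝ}

lemma ne_neg_natCast_of_neg_one_lt (hx : -1 < x) (hx0 : x ≠ 0) (m : ℕ) : x ≠ -m := by
  rintro rfl
  have hm : m < 1 := by exact_mod_cast neg_lt_neg_iff.1 hx
  exact hx0 (by simp [Nat.lt_one_iff.1 hm])

/- At a positive integer `x` both sides vanish, since `Gamma (1 - x)` takes the junk value `0`. -/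
lemma inv_Gamma_one_sub (hx : ∀ m : ℕ, x ≠ -m) :
    (Gamma (1 - x))⁻¹ = Gamma x * sin (π * x) / π := by
  have reflection := Gamma_mul_Gamma_one_sub x
  have hΓ : Gamma x ≠ 0 := Gamma_ne_zero hx
  rcases eq_or_ne (sin (π * x)) 0 with hsin | hsin
  · have hΓ' : Gamma (1 - x) = 0 := by simpa [hsin, hΓ] using reflection
    simp only [hΓ', hsin, inv_zero, mul_zero, zero_div]
  · rw [eq_div_iff hsin] at reflection
    refine inv_eq_of_mul_eq_one_right ?_
    rw [mul_div_assoc', div_eq_one_iff_eq pi_ne_zero]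
    linear_combination reflection

lemma Gamma_neg_add_mul_sub_eq (hx : ∀ m : ℕ, x ≠ -m) (hy : ∀ m : ℕ, y ≠ -m)
    (hxy : ∀ m : ℕ, -(x + y) ≠ -m) (hsin : sin (π * ((x + y) / 2)) ≠ 0) :
    Gamma (-(x + y)) * (Gamma x / Gamma (1 - y) - Gamma y / Gamma (1 - x)) =
      sin (π * ((x - y) / 2)) / sin (π * ((x + y) / 2)) * Gamma x * Gamma y /
        Gamma (1 + (x + y)) := by
  have hdiff : sin (π * y) - sin (π * x) =
      -2 * sin (π * ((x - y) / 2)) * cos (π * ((x + y) / 2)) := by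
    rw [sin_sub_sin, show (π * y - π * x) / 2 = -(π * ((x - y) / 2)) by ring, sin_neg,
      show (π * y + π * x) / 2 = π * ((x + y) / 2) by ring]
    ring
  have hdouble : sin (π * -(x + y)) =
      -(2 * sin (π * ((x + y) / 2)) * cos (π * ((x + y) / 2))) := by
    rw [← sin_two_mul, ← sin_neg]
    ring_nf
  have hinv : (sin (π * ((x + y) / 2)))⁻¹ * (Gamma (1 + (x + y)))⁻¹ =
      -2 * cos (π * ((x + y) / 2)) * Gamma (-(x + y)) / π := by
    rw [← sub_neg_eq_add 1, inv_Gamma_one_sub hxy, hdouble, inv_mul_eq_iff_eq_mul₀ hsin]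
    ring
  calc Gamma (-(x + y)) * (Gamma x / Gamma (1 - y) - Gamma y / Gamma (1 - x))
      = Gamma (-(x + y)) * Gamma x * Gamma y / π * (sin (π * y) - sin (π * x)) := by
        rw [div_eq_mul_inv _ (Gamma (1 - y)), div_eq_mul_inv _ (Gamma (1 - x)),
          inv_Gamma_one_sub hx, inv_Gamma_one_sub hy]
        ring
    _ = sin (π * ((x - y) / 2)) * Gamma x * Gamma y *
          (-2 * cos (π * ((x + y) / 2)) * Gamma (-(x + y)) / π) := by rw [hdiff]; ring
    _ = sin (π * ((x - y) / 2)) / sin (π * ((x + y) / 2)) * Gamma x * Gamma y /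
          Gamma (1 + (x + y)) := by rw [← hinv]; ring

end Reflection

section SymmetrizedIntegral

variable {c ζ b : ℝ}

lemma rpow_sub_one_mul_rpow_add_rpow_neg {u : ℝ} (hu : 0 < u) (c ζ : ℝ) :
    u ^ (c - 1) * (u ^ ζ + u ^ (-ζ)) = u ^ (c + ζ - 1) + u ^ (c - ζ - 1) := by
  rw [mul_add, ← rpow_add hu, ← rpow_add hu, sub_add_eq_add_sub, sub_add_eq_add_sub,
    ← sub_eq_add_neg]

lemma eqOn_rpow_mul_rpow_add_rpow_neg_mul (c ζ : ℝ) (f : ℝ → ℝ) :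
    EqOn (fun u : ℝ => u ^ (c - 1) * (u ^ ζ + u ^ (-ζ)) * f u)
      (fun u : ℝ => u ^ (c + ζ - 1) * f u + u ^ (c - ζ - 1) * f u) (Ioo 0 1) := fun u hu => by
  simp only [rpow_sub_one_mul_rpow_add_rpow_neg hu.1, add_mul]

lemma integrableOn_rpow_mul_rpow_add_rpow_neg_mul (hp : -1 < c + ζ) (hq : -1 < c - ζ)
    (hb : 0 < b) :
    IntegrableOn (fun u : ℝ => u ^ (c - 1) * (u ^ ζ + u ^ (-ζ)) *
      ((1 - u) ^ (b - 1) * (1 + u) - 1)) (Ioo 0 1) :=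
  ((intervalIntegrable_iff_integrableOn_Ioo_of_le zero_le_one).1
    ((intervalIntegrable_rpow_mul_one_sub_rpow_mul_one_add_sub_one hp hb).add
      (intervalIntegrable_rpow_mul_one_sub_rpow_mul_one_add_sub_one hq hb))).congr_fun
    (eqOn_rpow_mul_rpow_add_rpow_neg_mul c ζ _).symm measurableSet_Ioo

lemma integral_rpow_mul_rpow_add_rpow_neg_mul (hp : -1 < c + ζ) (hp0 : c + ζ ≠ 0)
    (hq : -1 < c - ζ) (hq0 : c - ζ ≠ 0) (hb : 0 < b) :
    ∫ u in Ioo (0 : ℝ) 1, u ^ (c - 1) * (u ^ ζ + u ^ (-ζ)) *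
        ((1 - u) ^ (b - 1) * (1 + u) - 1) =
      (2 * (c + ζ) + b) * (Gamma (c + ζ) * Gamma b / Gamma (c + ζ + b + 1)) - 1 / (c + ζ) +
      ((2 * (c - ζ) + b) * (Gamma (c - ζ) * Gamma b / Gamma (c - ζ + b + 1)) - 1 / (c - ζ)) := by
  rw [setIntegral_congr_fun measurableSet_Ioo (eqOn_rpow_mul_rpow_add_rpow_neg_mul c ζ _),
    ← integral_Ioc_eq_integral_Ioo, ← intervalIntegral.integral_of_le zero_le_one,
    intervalIntegral.integral_add
      (intervalIntegrable_rpow_mul_one_sub_rpow_mul_one_add_sub_one hp hb)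
      (intervalIntegrable_rpow_mul_one_sub_rpow_mul_one_add_sub_one hq hb),
    integral_rpow_mul_one_sub_rpow_mul_one_add_sub_one hp hp0 hb,
    integral_rpow_mul_one_sub_rpow_mul_one_add_sub_one hq hq0 hb]

end SymmetrizedIntegral

theorem dF_dzeta_integral_form_general (d ζ : ℝ) (hd : d < 0) (hζ : |ζ| < 1 + d / 2)
    (hp0 : d / 2 + ζ ≠ 0) (hq0 : d / 2 - ζ ≠ 0) :
    IntegrableOn
      (fun u : ℝ => u ^ (d / 2 - 1) * (u ^ ζ + u ^ (-ζ)) *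
        ((1 - u) ^ (-d - 1) * (1 + u) - 1)) (Ioo 0 1) ∧
    -(1 / 2) * (1 / (d / 2 + ζ) + 1 / (d / 2 - ζ)) -
      (1 / 2) * ∫ u in Ioo (0 : ℝ) 1,
        u ^ (d / 2 - 1) * (u ^ ζ + u ^ (-ζ)) * ((1 - u) ^ (-d - 1) * (1 + u) - 1)
      = -ζ * (sin (π * ζ) / sin (π * d / 2)) *
          Gamma (d / 2 - ζ) * Gamma (d / 2 + ζ) / Gamma (1 + d) := by
  obtain ⟨hζl, hζr⟩ := abs_lt.1 hζ
  have hp : -1 < d / 2 + ζ := by linarith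
  have hq : -1 < d / 2 - ζ := by linarith
  have hb : 0 < -d := neg_pos.2 hd
  refine ⟨integrableOn_rpow_mul_rpow_add_rpow_neg_mul hp hq hb, ?_⟩
  have hsum : d / 2 + ζ + (d / 2 - ζ) = d := by ring
  have hsin : sin (π * (d / 2)) ≠ 0 :=
    (sin_neg_of_neg_of_neg_pi_lt (by nlinarith [pi_pos]) (by nlinarith [pi_pos])).ne
  have hΓ := Gamma_neg_add_mul_sub_eq (ne_neg_natCast_of_neg_one_lt hp hp0)
    (ne_neg_natCast_of_neg_one_lt hq hq0)
    (ne_neg_natCast_of_neg_one_lt (by linarith) (by linarith)) (by rwa [hsum])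
  rw [hsum, show (d / 2 + ζ - (d / 2 - ζ)) / 2 = ζ by ring] at hΓ
  rw [integral_rpow_mul_rpow_add_rpow_neg_mul hp hp0 hq hq0 hb,
    show d / 2 + ζ + -d + 1 = 1 - (d / 2 - ζ) by ring,
    show d / 2 - ζ + -d + 1 = 1 - (d / 2 + ζ) by ring, mul_div_assoc π d 2]
  linear_combination -ζ * hΓ

theorem dF_dzeta_integral_form (d ζ : ℝ) (hζ0 : 0 < ζ) (hζ1 : ζ < 1)
    (hd1 : max (2 * ζ - 2) (-(2 * ζ)) < d) (hd2 : d < 0) :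
    MeasureTheory.IntegrableOn
      (fun u : ℝ => u ^ (d / 2 - 1) * (u ^ ζ + u ^ (-ζ)) *
        ((1 - u) ^ (-d - 1) * (1 + u) - 1)) (Set.Ioo 0 1) ∧
    -(1 / 2) * (1 / (d / 2 + ζ) + 1 / (d / 2 - ζ)) -
      (1 / 2) * ∫ u in Set.Ioo (0 : ℝ) 1,
        u ^ (d / 2 - 1) * (u ^ ζ + u ^ (-ζ)) * ((1 - u) ^ (-d - 1) * (1 + u) - 1)
      = -ζ * (Real.sin (π * ζ) / Real.sin (π * d / 2)) *
          Real.Gamma (d / 2 - ζ) * Real.Gamma (d / 2 + ζ) / Real.Gamma (1 + d) := by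
  obtain ⟨hd, hζ⟩ := max_lt_iff.1 hd1
  exact dF_dzeta_integral_form_general d ζ hd2 (by rw [abs_of_pos hζ0]; linarith)
    (by linarith) (by linarith)
end

section
/- Let d be a real number with d < 0 and d not an integer. Then the series ∑_{n≥0} D_n(d) converges absolutely and ∑_{n≥0} D_n(d) = 0. (In this analytic continuation in d, the total number of Laplacian eigenmodes on the sphere vanishes, so that terms proportional to Tr[1] drop from the regularized free energy.) -/
open Real

/-- The analytically continued degeneracy of spherical harmonics on `S^d`. -/
noncomputable def sphereDegeneracy (d : ℝ) (n : ℕ) : ℝ :=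
  Real.Gamma ((n : ℝ) + d - 1) * (2 * (n : ℝ) + d - 1) /
    (Real.Gamma ((n : ℝ) + 1) * Real.Gamma d)

/-! The harmonics of degree `N` on `S^(d+1)` decompose, under the rotations of the equatorial `S^d`,
into those of degrees `0, …, N` on `S^d`, each occurring once, so `∑ n ≤ N, D_n(d) = D_N(d+1)`.
This identity survives analytic continuation in `d`, where it follows from the recurrence of `Γ`.
Since `D_n(d) ~ 2 n^(d-1) / Γ(d)`, for `d < 0` the series converges absolutely and its partial sums
`D_N(d+1) ~ 2 N^d / Γ(d+1)` tend to `0`. -/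

open Asymptotics Filter Topology
open scoped Nat

section Gamma

variable {s : ℝ}

theorem Gamma_add_natCast_eq_mul_prod (hs : ∀ m : ℕ, s ≠ -m) (n : ℕ) :
    Gamma (s + n) = Gamma s * ∏ j ∈ Finset.range n, (s + j) := by
  induction n with
  | zero => simp
  | succ n ih =>
    have hsn : s + n ≠ 0 := fun h => hs n (eq_neg_of_add_eq_zero_left h)
    rw [Finset.prod_range_succ, ← mul_assoc, ← ih, Nat.cast_succ, ← add_assoc, Gamma_add_one hsn,
      mul_comm]

theorem GammaSeq_eq_mul_Gamma_div (hs : ∀ m : ℕ, s ≠ -m) (n : ℕ) :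
    GammaSeq s n = n ! * (n : ℝ) ^ s * Gamma s / Gamma (s + 1 + n) := by
  have hΓ : Gamma s ≠ 0 := Gamma_ne_zero hs
  rw [add_assoc, add_comm 1, ← Nat.cast_succ, Gamma_add_natCast_eq_mul_prod hs, GammaSeq,
    mul_comm (Gamma s), mul_div_mul_right _ _ hΓ, mul_comm (n ! : ℝ)]

theorem isEquivalent_Gamma_add_one_add_natCast (hs : ∀ m : ℕ, s ≠ -m) :
    (fun n : ℕ => Gamma (s + 1 + n)) ~[atTop] fun n => n ! * (n : ℝ) ^ s := by
  have hΓ : Gamma s ≠ 0 := Gamma_ne_zero hs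
  have hlim : Tendsto (fun n : ℕ => Gamma s / GammaSeq s n) atTop (𝓝 1) := by
    rw [← div_self hΓ]
    exact tendsto_const_nhds.div (GammaSeq_tendsto_Gamma s) hΓ
  have hpos : ∀ᶠ n : ℕ in atTop, n ! * (n : ℝ) ^ s ≠ 0 := by
    filter_upwards [eventually_gt_atTop 0] with n hn
    positivity
  refine (isEquivalent_iff_tendsto_one hpos).2 (hlim.congr fun n => ?_)
  rw [GammaSeq_eq_mul_Gamma_div hs, div_div_eq_mul_div, mul_comm (Gamma s),
    mul_div_mul_right _ _ hΓ, Pi.div_apply]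

theorem isEquivalent_mul_natCast_add {a : ℝ} (ha : a ≠ 0) (b : ℝ) :
    (fun n : ℕ => a * n + b) ~[atTop] fun n : ℕ => a * (n : ℝ) := by
  refine IsEquivalent.refl.add_isLittleO ((isLittleO_const_mul_right_iff ha).2 ?_)
  exact isLittleO_const_id_atTop b |>.comp_tendsto tendsto_natCast_atTop_atTop

theorem isEquivalent_Gamma_add_natCast_of_add_one
    (h : (fun n : ℕ => Gamma (s + 1 + n)) ~[atTop] fun n => n ! * (n : ℝ) ^ s) :
    (fun n : ℕ => Gamma (s + n)) ~[atTop] fun n => n ! * (n : ℝ) ^ (s - 1) := by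
  have hlin : (fun n : ℕ => s + n) ~[atTop] fun n : ℕ => (n : ℝ) := by
    simpa [add_comm] using isEquivalent_mul_natCast_add one_ne_zero s
  refine ((h.div hlin).congr_left ?_).congr_right ?_
  · have hne : ∀ᶠ n : ℕ in atTop, s + n ≠ 0 :=
      (tendsto_atTop_add_const_left _ s tendsto_natCast_atTop_atTop).eventually_ne_atTop 0
    filter_upwards [hne] with n hn
    rw [Pi.div_apply, add_right_comm, Gamma_add_one hn, mul_div_cancel_left₀ _ hn]
  · filter_upwards [eventually_ne_atTop 0] with n hn
    rw [Pi.div_apply, rpow_sub_one (Nat.cast_ne_zero.2 hn), mul_div_assoc]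

theorem isEquivalent_Gamma_add_natCast (s : ℝ) :
    (fun n : ℕ => Gamma (s + n)) ~[atTop] fun n => n ! * (n : ℝ) ^ (s - 1) := by
  obtain ⟨k, hk⟩ := exists_nat_gt (-s)
  induction k generalizing s with
  | zero =>
    have hs : ∀ m : ℕ, s ≠ -m := fun m => by
      have : (0 : ℝ) ≤ m := m.cast_nonneg
      have : -s < 0 := by simpa using hk
      linarith
    exact isEquivalent_Gamma_add_natCast_of_add_one (isEquivalent_Gamma_add_one_add_natCast hs)
  | succ k ih =>
    have hstep := ih (s + 1) (by push_cast at hk; linarith)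
    rw [add_sub_cancel_right] at hstep
    exact isEquivalent_Gamma_add_natCast_of_add_one hstep

end Gamma

section sphereDegeneracy

variable {d : ℝ}

-- If `d` is a pole of `Γ`, then `Gamma d = 0` in Lean and both sides are identically `0`.
theorem isEquivalent_sphereDegeneracy (d : ℝ) :
    sphereDegeneracy d ~[atTop] fun n => 2 / Gamma d * (n : ℝ) ^ (d - 1) := by
  have hΓ := isEquivalent_Gamma_add_natCast (d - 1)
  have hlin := isEquivalent_mul_natCast_add two_ne_zero (d - 1)
  have hden : (fun n : ℕ => n ! * Gamma d) ~[atTop] fun n : ℕ => n ! * Gamma d := .refl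
  refine (((hΓ.mul hlin).div hden).congr_left ?_).congr_right ?_
  · refine .of_forall fun n => ?_
    simp only [sphereDegeneracy, Pi.div_apply, Pi.mul_apply, Gamma_nat_eq_factorial]
    ring_nf
  · filter_upwards [eventually_ne_atTop 0] with n hn
    have hn' : (n : ℝ) ≠ 0 := Nat.cast_ne_zero.2 hn
    have hfac : (n ! : ℝ) ≠ 0 := by positivity
    simp only [Pi.div_apply, Pi.mul_apply]
    rw [rpow_sub_one hn' (d - 1)]
    field_simp

theorem summable_sphereDegeneracy (hd : d < 0) : Summable (sphereDegeneracy d) :=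
  summable_of_isBigO_nat ((summable_nat_rpow.2 (by linarith)).mul_left _)
    (isEquivalent_sphereDegeneracy d).isBigO

theorem tendsto_sphereDegeneracy_nhds_zero (hd : d < 1) :
    Tendsto (sphereDegeneracy d) atTop (𝓝 0) := by
  have hpow : Tendsto (fun n : ℕ => (n : ℝ) ^ (d - 1)) atTop (𝓝 0) := by
    simpa [Function.comp_def] using
      (tendsto_rpow_neg_atTop (sub_pos.2 hd)).comp (tendsto_natCast_atTop_atTop (R := ℝ))
  exact (isEquivalent_sphereDegeneracy d).symm.tendsto_nhds (by simpa using hpow.const_mul _)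

theorem sphereDegeneracy_zero (hd : ∀ m : ℕ, d ≠ -m) (hd₁ : d ≠ 1) :
    sphereDegeneracy d 0 = 1 := by
  have hΓ : Gamma (d - 1) * (d - 1) = Gamma d := by
    rw [mul_comm, ← Gamma_add_one (sub_ne_zero.2 hd₁), sub_add_cancel]
  simp [sphereDegeneracy, hΓ, Gamma_ne_zero hd]

theorem sphereDegeneracy_add_one_succ (hd : ∀ m : ℕ, d ≠ -m) (n : ℕ) :
    sphereDegeneracy (d + 1) (n + 1) = sphereDegeneracy (d + 1) n + sphereDegeneracy d (n + 1) := by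
  have hΓ : Gamma d ≠ 0 := Gamma_ne_zero hd
  have hd₀ : d ≠ 0 := by simpa using hd 0
  have hnd : (n : ℝ) + d ≠ 0 := fun h => hd n (eq_neg_of_add_eq_zero_right h)
  have hn : (n : ℝ) + 1 ≠ 0 := n.cast_add_one_ne_zero
  have hΓn : Gamma ((n : ℝ) + 1) ≠ 0 := (Gamma_pos_of_pos n.cast_add_one_pos).ne'
  have hshift : (n : ℝ) + 1 + (d + 1) - 1 = n + d + 1 := by ring
  have hshift' : (n : ℝ) + (d + 1) - 1 = n + d := by ring
  have hshift'' : (n : ℝ) + 1 + d - 1 = n + d := by ring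
  simp only [sphereDegeneracy, Nat.cast_succ, hshift, hshift', hshift'', Gamma_add_one hn,
    Gamma_add_one hnd, Gamma_add_one hd₀]
  field_simp
  ring

theorem sum_range_succ_sphereDegeneracy (hd : ∀ m : ℕ, d ≠ -m) (hd₁ : d ≠ 1) (N : ℕ) :
    ∑ n ∈ Finset.range (N + 1), sphereDegeneracy d n = sphereDegeneracy (d + 1) N := by
  induction N with
  | zero =>
    have hd' : ∀ m : ℕ, d + 1 ≠ -m := fun m h => hd (m + 1) (by push_cast; linarith)
    have hd₁' : d + 1 ≠ 1 := by simpa using hd 0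
    simp [sphereDegeneracy_zero hd hd₁, sphereDegeneracy_zero hd' hd₁']
  | succ N ih => rw [Finset.sum_range_succ, ih, sphereDegeneracy_add_one_succ hd]

end sphereDegeneracy

theorem sum_multiplicities_vanishes (d : ℝ) (hd : d < 0) (hdint : ∀ m : ℤ, d ≠ (m : ℝ)) :
    Summable (fun n : ℕ => |sphereDegeneracy d n|) ∧
    ∑' n : ℕ, sphereDegeneracy d n = 0 := by
  have hsum : Summable (sphereDegeneracy d) := summable_sphereDegeneracy hd
  have hpole : ∀ m : ℕ, d ≠ -m := fun m => by exact_mod_cast hdint (-m)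
  have hpartial : Tendsto (fun N => ∑ n ∈ Finset.range (N + 1), sphereDegeneracy d n)
      atTop (𝓝 0) := by
    simp only [sum_range_succ_sphereDegeneracy hpole (by linarith)]
    exact tendsto_sphereDegeneracy_nhds_zero (by linarith)
  exact ⟨hsum.abs, tendsto_nhds_unique
    ((tendsto_add_atTop_iff_nat 1).2 hsum.hasSum.tendsto_sum_nat) hpartial⟩
end

section
/- Let a, b, c be real numbers with a > −1, a ≠ 0, b > 0 and c > 0. Then the function t ↦ (1−t)^{a−1}·(t^{b−1} − t^{c−1}) is Lebesgue integrable on (0,1) and ∫₀¹ (1−t)^{a−1}(t^{b−1} − t^{c−1}) dt = Γ(a)Γ(b)/Γ(a+b) − Γ(a)Γ(c)/Γ(a+c). (This is the subtracted integral representation of the difference of Beta functions, valid also in the range −1 < a < 0 where each separate Beta integral diverges.) -/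
open Real MeasureTheory

/-!
The function `F t = (1 - t) ^ a * (t ^ b - t ^ c)` has derivative
`(a + b) (1 - t) ^ a t ^ (b - 1) - (a + c) (1 - t) ^ a t ^ (c - 1)
  - a (1 - t) ^ (a - 1) (t ^ (b - 1) - t ^ (c - 1))`,
and it vanishes at both ends of `(0, 1)`: at `1` because `t ^ b - t ^ c = O(1 - t)` and `-1 < a`.
Integrating, `a` times the subtracted integral is `(a + b) B(a + 1, b) - (a + c) B(a + 1, c)`,
where the Beta integrals converge, and the recurrence `(a + b) B(a + 1, b) = a B(a, b)` concludes.
-/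

section BetaIntegral

open ProbabilityTheory Set

lemma integral_one_sub_rpow_mul_rpow {α β : ℝ} (hα : 0 < α) (hβ : 0 < β) :
    ∫ t in Ioo (0 : ℝ) 1, (1 - t) ^ (α - 1) * t ^ (β - 1) = beta α β := by
  have integral_pdf : ∫ t in Ioo (0 : ℝ) 1,
      1 / beta β α * t ^ (β - 1) * (1 - t) ^ (α - 1) = 1 := by
    rw [integral_eq_lintegral_of_nonneg_ae _ (Measurable.aestronglyMeasurable (by fun_prop)),
      ← lintegral_betaPDF, lintegral_betaPDF_eq_one hβ hα, ENNReal.toReal_one]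
    refine ae_restrict_of_forall_mem measurableSet_Ioo fun t ht => ?_
    have norm_const_pos := beta_pos hβ hα
    have rpow_pos := rpow_pos_of_pos ht.1 (β - 1)
    have one_sub_rpow_pos := rpow_pos_of_pos (sub_pos.2 ht.2) (α - 1)
    simp only [Pi.zero_apply]
    positivity
  have beta_comm : beta β α = beta α β := by
    rw [beta, beta, mul_comm, add_comm]
  simp_rw [mul_assoc, integral_const_mul, mul_comm (_ ^ (β - 1)), one_div] at integral_pdf
  rw [← beta_comm]
  exact ((inv_mul_eq_one₀ (beta_pos hβ hα).ne').1 integral_pdf).symm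

lemma integrableOn_one_sub_rpow_mul_rpow {α β : ℝ} (hα : 0 < α) (hβ : 0 < β) :
    IntegrableOn (fun t : ℝ => (1 - t) ^ (α - 1) * t ^ (β - 1)) (Ioo 0 1) :=
  .of_integral_ne_zero <| (integral_one_sub_rpow_mul_rpow hα hβ).trans_ne (beta_pos hα hβ).ne'

lemma add_mul_beta_add_one_left {a : ℝ} (ha : a ≠ 0) (b : ℝ) :
    (a + b) * beta (a + 1) b = a * beta a b := by
  rw [beta, beta, Gamma_add_one ha, add_right_comm]
  -- The convention `Γ 0 = 0` together with `x / 0 = 0` agrees with `1 / Γ` having a zero at `0`.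
  obtain hab | hab := eq_or_ne (a + b) 0
  · simp [hab]
  · rw [Gamma_add_one hab, mul_assoc a, mul_div_mul_comm, ← mul_assoc, mul_div_cancel₀ _ hab]

end BetaIntegral

section SubtractedIntegrand

open Set Filter Topology

lemma one_sub_rpow_le_max_mul {t : ℝ} (ht : 0 < t) (ht1 : t ≤ 1) (d : ℝ) :
    1 - t ^ d ≤ max d 1 * (1 - t) := by
  have bernoulli : 1 + max d 1 * (t - 1) ≤ (1 + (t - 1)) ^ max d 1 :=
    one_add_mul_self_le_rpow_one_add (by linarith) (le_max_right d 1)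
  have rpow_max_le : t ^ max d 1 ≤ t ^ d :=
    rpow_le_rpow_of_exponent_ge ht ht1 (le_max_left d 1)
  rw [add_sub_cancel] at bernoulli
  linarith

lemma abs_rpow_sub_rpow_le {t : ℝ} (ht : 0 < t) (ht1 : t ≤ 1) (p q : ℝ) :
    |t ^ p - t ^ q| ≤ max |p - q| 1 * (1 - t) * t ^ min p q := by
  wlog hpq : p ≤ q generalizing p q
  · simpa only [abs_sub_comm, min_comm] using this q p (le_of_not_ge hpq)
  have factor : t ^ p - t ^ q = (1 - t ^ (q - p)) * t ^ p := by
    rw [sub_mul, one_mul, ← rpow_add ht, sub_add_cancel]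
  have nonneg : 0 ≤ t ^ p - t ^ q := sub_nonneg.2 (rpow_le_rpow_of_exponent_ge ht ht1 hpq)
  rw [abs_of_nonneg nonneg, min_eq_left hpq, abs_sub_comm, abs_of_nonneg (sub_nonneg.2 hpq), factor]
  gcongr
  exact one_sub_rpow_le_max_mul ht ht1 (q - p)

lemma norm_one_sub_rpow_mul_rpow_sub_rpow_le {t : ℝ} (ht : t ∈ Ioo (0 : ℝ) 1) (s p q : ℝ) :
    ‖(1 - t) ^ s * (t ^ p - t ^ q)‖ ≤
      max |p - q| 1 * ((1 - t) ^ (s + 1) * t ^ min p q) := by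
  have one_sub_pos : 0 < 1 - t := sub_pos.2 ht.2
  calc ‖(1 - t) ^ s * (t ^ p - t ^ q)‖ = (1 - t) ^ s * |t ^ p - t ^ q| := by
        rw [norm_mul, norm_of_nonneg (rpow_nonneg one_sub_pos.le s), norm_eq_abs]
    _ ≤ (1 - t) ^ s * (max |p - q| 1 * (1 - t) * t ^ min p q) := by
        gcongr
        exact abs_rpow_sub_rpow_le ht.1 ht.2.le p q
    _ = max |p - q| 1 * ((1 - t) ^ (s + 1) * t ^ min p q) := by
        rw [rpow_add_one one_sub_pos.ne']
        ring

lemma integrableOn_one_sub_rpow_mul_rpow_sub_rpow {a b c : ℝ} (ha : -1 < a)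
    (hb : 0 < b) (hc : 0 < c) :
    IntegrableOn (fun t : ℝ => (1 - t) ^ (a - 1) * (t ^ (b - 1) - t ^ (c - 1))) (Ioo 0 1) := by
  have dominating :=
    (integrableOn_one_sub_rpow_mul_rpow (neg_lt_iff_pos_add.1 ha) (lt_min hb hc)).const_mul
      (max |b - 1 - (c - 1)| 1)
  refine dominating.mono' (Measurable.aestronglyMeasurable (by fun_prop)) ?_
  refine ae_restrict_of_forall_mem measurableSet_Ioo fun t ht => ?_
  have bound := norm_one_sub_rpow_mul_rpow_sub_rpow_le ht (a - 1) (b - 1) (c - 1)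
  simpa only [sub_add_cancel, add_sub_cancel_right, min_sub_sub_right] using bound

lemma tendsto_one_sub_rpow_mul_rpow_sub_rpow_nhds_zero (a : ℝ) {b c : ℝ} (hb : 0 < b) (hc : 0 < c) :
    Tendsto (fun t : ℝ => (1 - t) ^ a * (t ^ b - t ^ c)) (𝓝 0) (𝓝 0) := by
  have cont : ContinuousAt (fun t : ℝ => (1 - t) ^ a * (t ^ b - t ^ c)) 0 :=
    (ContinuousAt.rpow_const (by fun_prop) (.inl (by norm_num))).mul
      ((continuousAt_rpow_const _ _ (.inr hb.le)).sub (continuousAt_rpow_const _ _ (.inr hc.le)))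
  simpa only [zero_rpow hb.ne', zero_rpow hc.ne', sub_self, mul_zero] using cont.tendsto

lemma tendsto_one_sub_rpow_mul_rpow_sub_rpow_nhdsLT_one {a : ℝ} (ha : -1 < a) (b c : ℝ) :
    Tendsto (fun t : ℝ => (1 - t) ^ a * (t ^ b - t ^ c)) (𝓝[<] 1) (𝓝 0) := by
  have exponent_pos : 0 < a + 1 := neg_lt_iff_pos_add.1 ha
  have cont : ContinuousAt
      (fun t : ℝ => max |b - c| 1 * ((1 - t) ^ (a + 1) * t ^ min b c)) 1 :=
    continuousAt_const.mul
      ((ContinuousAt.rpow_const (by fun_prop) (.inr exponent_pos.le)).mul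
        (continuousAt_rpow_const _ _ (.inl one_ne_zero)))
  have dominating := cont.tendsto
  simp only [sub_self, zero_rpow exponent_pos.ne', zero_mul, mul_zero] at dominating
  refine squeeze_zero_norm' ?_ (dominating.mono_left nhdsWithin_le_nhds)
  filter_upwards [Ioo_mem_nhdsLT zero_lt_one] with t ht
  exact norm_one_sub_rpow_mul_rpow_sub_rpow_le ht a b c

lemma hasDerivAt_one_sub_rpow_mul_rpow {t : ℝ} (ht : t ∈ Ioo (0 : ℝ) 1) (a b : ℝ) :
    HasDerivAt (fun t : ℝ => (1 - t) ^ a * t ^ b)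
      ((a + b) * ((1 - t) ^ a * t ^ (b - 1)) - a * ((1 - t) ^ (a - 1) * t ^ (b - 1))) t := by
  have one_sub_ne : 1 - t ≠ 0 := (sub_pos.2 ht.2).ne'
  have deriv_left : HasDerivAt (fun t : ℝ => (1 - t) ^ a) (-1 * a * (1 - t) ^ (a - 1)) t :=
    ((hasDerivAt_id t).const_sub 1).rpow_const (.inl one_sub_ne)
  have deriv_right : HasDerivAt (fun t : ℝ => t ^ b) (b * t ^ (b - 1)) t :=
    hasDerivAt_rpow_const (.inl ht.1.ne')
  have rpow_left : (1 - t) ^ a = (1 - t) ^ (a - 1) * (1 - t) := by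
    rw [← rpow_add_one one_sub_ne, sub_add_cancel]
  have rpow_right : t ^ b = t ^ (b - 1) * t := by
    rw [← rpow_add_one ht.1.ne', sub_add_cancel]
  refine (deriv_left.mul deriv_right).congr_deriv ?_
  rw [rpow_left, rpow_right]
  ring

end SubtractedIntegrand

section SubtractedIntegral

open ProbabilityTheory Set Filter Topology

lemma mul_integral_one_sub_rpow_mul_rpow_sub_rpow {a b c : ℝ} (ha : -1 < a)
    (hb : 0 < b) (hc : 0 < c) :
    a * ∫ t in Ioo (0 : ℝ) 1, (1 - t) ^ (a - 1) * (t ^ (b - 1) - t ^ (c - 1)) =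
      (a + b) * beta (a + 1) b - (a + c) * beta (a + 1) c := by
  have exponent_pos : 0 < a + 1 := neg_lt_iff_pos_add.1 ha
  have int_b := (integrableOn_one_sub_rpow_mul_rpow exponent_pos hb).const_mul (a + b)
  have int_c := (integrableOn_one_sub_rpow_mul_rpow exponent_pos hc).const_mul (a + c)
  have int_bc : IntegrableOn (fun t : ℝ => (a + b) * ((1 - t) ^ (a + 1 - 1) * t ^ (b - 1))
      - (a + c) * ((1 - t) ^ (a + 1 - 1) * t ^ (c - 1))) (Ioo 0 1) := int_b.sub int_c
  have int_sub := (integrableOn_one_sub_rpow_mul_rpow_sub_rpow ha hb hc).const_mul a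
  have deriv : ∀ t ∈ Ioo (0 : ℝ) 1, HasDerivAt (fun t : ℝ => (1 - t) ^ a * (t ^ b - t ^ c))
      ((a + b) * ((1 - t) ^ (a + 1 - 1) * t ^ (b - 1))
        - (a + c) * ((1 - t) ^ (a + 1 - 1) * t ^ (c - 1))
        - a * ((1 - t) ^ (a - 1) * (t ^ (b - 1) - t ^ (c - 1)))) t := by
    intro t ht
    simp only [mul_sub, add_sub_cancel_right]
    exact ((hasDerivAt_one_sub_rpow_mul_rpow ht a b).sub
      (hasDerivAt_one_sub_rpow_mul_rpow ht a c)).congr_deriv (by ring)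
  have ftc := intervalIntegral.integral_eq_sub_of_hasDerivAt_of_tendsto zero_lt_one deriv
    ((intervalIntegrable_iff_integrableOn_Ioo_of_le zero_le_one).2 (int_bc.sub int_sub))
    ((tendsto_one_sub_rpow_mul_rpow_sub_rpow_nhds_zero a hb hc).mono_left nhdsWithin_le_nhds)
    (tendsto_one_sub_rpow_mul_rpow_sub_rpow_nhdsLT_one ha b c)
  rw [intervalIntegral.integral_of_le zero_le_one, integral_Ioc_eq_integral_Ioo,
    integral_sub int_bc int_sub, integral_sub int_b int_c, integral_const_mul,
    integral_const_mul, integral_const_mul, integral_one_sub_rpow_mul_rpow exponent_pos hb,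
    integral_one_sub_rpow_mul_rpow exponent_pos hc, sub_self] at ftc
  exact (sub_eq_zero.1 ftc).symm

end SubtractedIntegral

theorem subtracted_beta_representation (a b c : ℝ) (ha1 : -1 < a) (ha0 : a ≠ 0)
    (hb : 0 < b) (hc : 0 < c) :
    MeasureTheory.IntegrableOn
      (fun t : ℝ => (1 - t) ^ (a - 1) * (t ^ (b - 1) - t ^ (c - 1))) (Set.Ioo 0 1) ∧
    ∫ t in Set.Ioo (0 : ℝ) 1, (1 - t) ^ (a - 1) * (t ^ (b - 1) - t ^ (c - 1))
      = Real.Gamma a * Real.Gamma b / Real.Gamma (a + b) -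
        Real.Gamma a * Real.Gamma c / Real.Gamma (a + c) := by
  refine ⟨integrableOn_one_sub_rpow_mul_rpow_sub_rpow ha1 hb hc, mul_left_cancel₀ ha0 ?_⟩
  rw [mul_integral_one_sub_rpow_mul_rpow_sub_rpow ha1 hb hc, add_mul_beta_add_one_left ha0,
    add_mul_beta_add_one_left ha0, ← mul_sub, ProbabilityTheory.beta, ProbabilityTheory.beta]
end

section
/- The power series ∑_{n≥0} A_n·xⁿ has radius of convergence exactly 27/256: it converges for every real x with |x| < 27/256 and diverges for every real x with |x| > 27/256. (The radius of convergence of the melonic resummation determines the maximal tetrahedral coupling λ_c for which the large-N model is defined.) -/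
/-- The Fuss–Catalan numbers of order 4. -/
noncomputable def fussCatalan4 (n : ℕ) : ℝ :=
  (1 / (4 * (n : ℝ) + 1)) * (Nat.choose (4 * n + 1) n : ℝ)

/-!
Passing from `n` to `n + 1` multiplies the Fuss–Catalan number
`((q + 1) * n)! / (n! * (q * n + 1)!)` of order `q + 1` by a ratio of two products of `q + 1`
affine functions of `n`, with slopes `q + 1` above the fraction bar and `1, q, …, q` below it. So
consecutive quotients tend to `(q + 1) ^ (q + 1) / q ^ q`, whose inverse is the radius of
convergence by the ratio test; for `q = 3` it is `27 / 256`.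
-/

open Filter FormalMultilinearSeries
open scoped Nat NNReal Topology

/-- The Fuss–Catalan numbers of order `p`, which count the `p`-ary trees with `n` internal nodes.
They are real-valued so that they can serve as the coefficients of a power series. -/
noncomputable def fussCatalan (p n : ℕ) : ℝ :=
  1 / ((p : ℝ) * n + 1) * (p * n + 1).choose n

theorem fussCatalan_four : fussCatalan 4 = fussCatalan4 := by
  ext n
  simp only [fussCatalan, fussCatalan4, Nat.cast_ofNat]

theorem fussCatalan_eq_factorial_div (q n : ℕ) :
    fussCatalan (q + 1) n = ((q + 1) * n)! / (n ! * (q * n + 1)! : ℝ) := by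
  have hle : n ≤ (q + 1) * n + 1 := by lia
  have hsub : (q + 1) * n + 1 - n = q * n + 1 := by lia
  rw [fussCatalan, Nat.cast_choose ℝ hle, hsub, Nat.factorial_succ ((q + 1) * n)]
  push_cast
  field_simp

theorem fussCatalan_div_succ (q n : ℕ) :
    fussCatalan (q + 1) n / fussCatalan (q + 1) (n + 1) =
      (n + 1) * (q * n + 2).ascFactorial q / ((q + 1) * n + 1).ascFactorial (q + 1) := by
  have hnum : ((q + 1) * (n + 1))! = ((q + 1) * n)! * ((q + 1) * n + 1).ascFactorial (q + 1) := by
    rw [Nat.factorial_mul_ascFactorial, mul_add_one]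
  have hden : (q * (n + 1) + 1)! = (q * n + 1)! * (q * n + 2).ascFactorial q := by
    rw [Nat.factorial_mul_ascFactorial, mul_add_one, add_right_comm]
  have hasc : ((q * n + 2).ascFactorial q : ℝ) ≠ 0 :=
    mod_cast (Nat.ascFactorial_pos (q * n + 1) q).ne'
  simp only [fussCatalan_eq_factorial_div, hnum, hden, Nat.factorial_succ n]
  push_cast
  field_simp

theorem tendsto_ascFactorial_div_pow (a b k : ℕ) :
    Tendsto (fun n : ℕ ↦ ((a * n + b).ascFactorial k : ℝ) / n ^ k) atTop (𝓝 (a ^ k)) := by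
  have haffine (i : ℕ) :
      Tendsto (fun n : ℕ ↦ ((a * n + b + i : ℕ) : ℝ) / n) atTop (𝓝 a) := by
    simpa [add_comm, add_left_comm, add_assoc] using
      tendsto_add_mul_div_add_mul_atTop_nhds (b + i : ℝ) 0 a one_ne_zero
  simpa [Nat.ascFactorial_eq_prod_range, Finset.prod_div_distrib] using
    tendsto_finsetProd (Finset.range k) fun i _ ↦ haffine i

theorem tendsto_fussCatalan_div_succ (q : ℕ) :
    Tendsto (fun n ↦ fussCatalan (q + 1) n / fussCatalan (q + 1) (n + 1)) atTop
      (𝓝 (q ^ q / (q + 1) ^ (q + 1))) := by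
  have hsucc : Tendsto (fun n : ℕ ↦ (n + 1 : ℝ) / n) atTop (𝓝 1) := by
    simpa [Nat.ascFactorial_succ] using tendsto_ascFactorial_div_pow 1 1 1
  have hlim := (hsucc.mul (tendsto_ascFactorial_div_pow q 2 q)).div
    (tendsto_ascFactorial_div_pow (q + 1) 1 (q + 1)) (by positivity)
  rw [one_mul, Nat.cast_add_one] at hlim
  refine hlim.congr' ?_
  filter_upwards [eventually_ne_atTop 0] with n hn
  simp only [Pi.div_apply]
  rw [fussCatalan_div_succ, pow_succ' (n : ℝ)]
  field_simp

-- At `q = 0` the convention `0 ^ 0 = 1` yields the radius `1` of the geometric series.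
theorem radius_ofScalars_fussCatalan (q : ℕ) (E : Type*) [NormedRing E] [NormedAlgebra ℝ E]
    [NormOneClass E] :
    (ofScalars E (fussCatalan (q + 1))).radius = (q ^ q / (q + 1) ^ (q + 1) : ℝ≥0) := by
  refine ofScalars_radius_eq_of_tendsto E _ ?_ ?_
  · exact div_ne_zero (mod_cast (Nat.pow_self_pos (n := q)).ne') (by positivity)
  · simpa [abs_of_nonneg (show 0 ≤ (q : ℝ) + 1 by positivity)] using
      (tendsto_fussCatalan_div_succ q).norm

theorem not_summable_smul_pow_of_radius_lt {𝕜 𝔸 : Type*} [NontriviallyNormedField 𝕜]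
    [NormedDivisionRing 𝔸] [NormedAlgebra 𝕜 𝔸] (c : ℕ → 𝕜) {x : 𝔸}
    (hx : (ofScalars 𝔸 c).radius < ‖x‖₊) : ¬ Summable fun n ↦ c n • x ^ n := by
  intro hsum
  refine hx.not_ge (le_radius_of_tendsto _ (l := 0) ?_)
  simpa [norm_smul] using hsum.tendsto_atTop_zero.norm

theorem fussCatalan4_radius_of_convergence_general (q : ℕ) {𝔸 : Type*} [NormedDivisionRing 𝔸]
    [NormedAlgebra ℝ 𝔸] [CompleteSpace 𝔸] :
    (∀ x : 𝔸, ‖x‖ < q ^ q / (q + 1) ^ (q + 1) →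
      Summable fun n ↦ fussCatalan (q + 1) n • x ^ n) ∧
    (∀ x : 𝔸, q ^ q / (q + 1) ^ (q + 1) < ‖x‖ →
      ¬ Summable fun n ↦ fussCatalan (q + 1) n • x ^ n) := by
  constructor <;> intro x hx
  · rw [← ofScalars_apply_eq']
    apply FormalMultilinearSeries.summable
    rw [mem_eball_zero_iff, radius_ofScalars_fussCatalan]
    exact_mod_cast hx
  · apply not_summable_smul_pow_of_radius_lt
    rw [radius_ofScalars_fussCatalan]
    exact_mod_cast hx

theorem fussCatalan4_radius_of_convergence :
    (∀ x : ℝ, |x| < 27 / 256 → Summable (fun n : ℕ => fussCatalan4 n * x ^ n)) ∧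
    (∀ x : ℝ, 27 / 256 < |x| → ¬ Summable (fun n : ℕ => fussCatalan4 n * x ^ n)) := by
  have hradius : (3 : ℝ) ^ 3 / (3 + 1) ^ (3 + 1) = 27 / 256 := by norm_num
  simpa only [Nat.cast_ofNat, hradius, Nat.reduceAdd, fussCatalan_four, smul_eq_mul,
    Real.norm_eq_abs] using fussCatalan4_radius_of_convergence_general 3 (𝔸 := ℝ)
end
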